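/- Let k be a field with char(k) ≠ 2 and let α ∈ k×. The field extension k(t)/k(tᵐ + αᵐ t^{−m}) is Galois of degree 2m with Galois group generated by t ↦ ζ_m t and t ↦ α/t, which is dihedral of order 2m (for m ≥ 3), provided k contains a primitive m-th root of unity ζ_m and char(k) ∤ 2m. -/

import Mathlib

/-!
In lowest terms `u = tᵐ + αᵐ / tᵐ` is `(t²ᵐ + αᵐ) / tᵐ`, so `k(t)` has degree `2m` over `k(u)`, and
the conjugates of `t` over `k(u)` inside `k(t)` are the `g` with `u(g) = u`. Both `ζt` and `α/t` are
such; let `σ` and `τ` be the automorphisms they define. Then `σ` has order `m`, while `τ` and `στ`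
both have the form `t ↦ a/t` and are therefore involutions, so `σ` and `τ` define a homomorphism
from the dihedral group of order `2m`. It is injective because no power of `σ` has the form
`t ↦ a/t`, and the `2m` automorphisms so obtained are as many as the degree allows.
-/

open IntermediateField RatFunc
open Polynomial (aeval)
open scoped Polynomial

section Dihedral

open DihedralGroup

variable {G : Type*} [Group G] {n : ℕ} {s t : G}

theorem zpow_mul_eq_mul_zpow_neg (ht : t ^ 2 = 1) (hst : (s * t) ^ 2 = 1) (i : ℤ) :
    s ^ i * t = t * s ^ (-i) := by
  have h : SemiconjBy t s⁻¹ s :=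
    calc t * s⁻¹ = t⁻¹ * s⁻¹ := by rw [← eq_inv_of_mul_eq_one_left ((sq t).symm.trans ht)]
      _ = (s * t)⁻¹ := (mul_inv_rev s t).symm
      _ = s * t := (eq_inv_of_mul_eq_one_left ((sq _).symm.trans hst)).symm
  simpa [SemiconjBy] using (h.zpow_right i).symm

/-- The homomorphism from the dihedral group of order `2n` given by its presentation
`⟨s, t | sⁿ = t² = (st)² = 1⟩`: it sends `r i` to `s ^ i` and `sr i` to `t * s ^ i`. -/
def dihedralLift (hs : s ^ n = 1) (ht : t ^ 2 = 1) (hst : (s * t) ^ 2 = 1) :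
    DihedralGroup n →* G :=
  let ρ : ZMod n →+ Additive G :=
    ZMod.lift n ⟨zmultiplesHom (Additive G) (Additive.ofMul s), by simp [← ofMul_pow, hs]⟩
  have hρ (i : ℤ) : (ρ i).toMul = s ^ i := by simp [ρ]
  have hρt := zpow_mul_eq_mul_zpow_neg ht hst
  let f : DihedralGroup n → G
    | r i => (ρ i).toMul
    | sr i => t * (ρ i).toMul
  MonoidHom.mk' f <| by
    rintro (i | i) (j | j) <;>
      obtain ⟨i, rfl⟩ := ZMod.intCast_surjective i <;>
      obtain ⟨j, rfl⟩ := ZMod.intCast_surjective j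
    · simp only [r_mul_r, f, ← Int.cast_add, hρ, zpow_add]
    · simp only [r_mul_sr, f, ← Int.cast_sub, hρ]
      rw [← mul_assoc, hρt, mul_assoc, ← zpow_add, neg_add_eq_sub]
    · simp only [sr_mul_r, f, ← Int.cast_add, hρ, zpow_add, mul_assoc]
    · simp only [sr_mul_sr, f, ← Int.cast_sub, hρ]
      rw [mul_assoc, ← mul_assoc _ t, hρt, ← mul_assoc, ← mul_assoc, ← sq, ht, one_mul,
        ← zpow_add, neg_add_eq_sub]

variable (hs : s ^ n = 1) (ht : t ^ 2 = 1) (hst : (s * t) ^ 2 = 1)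

theorem dihedralLift_r_intCast (i : ℤ) : dihedralLift hs ht hst (r i) = s ^ i := by
  simp [dihedralLift]

theorem dihedralLift_sr_intCast (i : ℤ) : dihedralLift hs ht hst (sr i) = t * s ^ i := by
  simp [dihedralLift]

theorem range_dihedralLift : (dihedralLift hs ht hst).range = Subgroup.closure {s, t} := by
  have hs_mem : s ∈ Subgroup.closure {s, t} := Subgroup.subset_closure (by simp)
  have ht_mem : t ∈ Subgroup.closure {s, t} := Subgroup.subset_closure (by simp)
  refine le_antisymm ?_ <| (Subgroup.closure_le _).mpr <| Set.pair_subset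
    ⟨r 1, by simpa using dihedralLift_r_intCast hs ht hst 1⟩
    ⟨sr 0, by simpa using dihedralLift_sr_intCast hs ht hst 0⟩
  rintro _ ⟨i | i, rfl⟩ <;> obtain ⟨i, rfl⟩ := ZMod.intCast_surjective i
  · exact dihedralLift_r_intCast hs ht hst i ▸ zpow_mem hs_mem i
  · exact dihedralLift_sr_intCast hs ht hst i ▸ mul_mem ht_mem (zpow_mem hs_mem i)

theorem dihedralLift_injective (hn : orderOf s = n) (hts : t ∉ Subgroup.zpowers s) :
    Function.Injective (dihedralLift hs ht hst) := by
  refine (injective_iff_map_eq_one _).mpr ?_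
  rintro (i | i) hi <;> obtain ⟨i, rfl⟩ := ZMod.intCast_surjective i
  · rw [dihedralLift_r_intCast, ← orderOf_dvd_iff_zpow_eq_one, hn,
      ← ZMod.intCast_zmod_eq_zero_iff_dvd] at hi
    rw [hi, r_zero]
  · rw [dihedralLift_sr_intCast, mul_eq_one_iff_eq_inv] at hi
    exact absurd (hi ▸ inv_mem (zpow_mem (Subgroup.mem_zpowers s) i)) hts

theorem dihedralLift_bijective [Finite G] (hn : orderOf s = n) (hts : t ∉ Subgroup.zpowers s)
    (hcard : Nat.card G ≤ 2 * n) : Function.Bijective (dihedralLift hs ht hst) :=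
  (dihedralLift_injective hs ht hst hn hts).bijective_of_nat_card_le (by rwa [nat_card])

end Dihedral

section RatFunc

variable {K : Type*} [Field K]

theorem finrank_adjoin_div_of_isCoprime {p q : K[X]} (h : IsCoprime p q) (hq : q ≠ 0) :
    Module.finrank K⟮(algebraMap K[X] (RatFunc K) p / algebraMap K[X] (RatFunc K) q)⟯ (RatFunc K) =
      max p.natDegree q.natDegree := by
  set f : RatFunc K := algebraMap K[X] (RatFunc K) p / algebraMap K[X] (RatFunc K) q with hf
  have hpq : f.num * q = p * f.denom := (num_mul_eq_mul_denom_iff hq).mpr hf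
  have hnum : Associated f.num p := associated_of_dvd_dvd (num_div_dvd p hq)
    (h.dvd_of_dvd_mul_right (hpq ▸ dvd_mul_right ..))
  have hdenom : Associated f.denom q := associated_of_dvd_dvd (denom_div_dvd p q)
    (h.symm.dvd_of_dvd_mul_left (hpq ▸ dvd_mul_left ..))
  rw [finrank_eq_max_natDegree,
    Polynomial.natDegree_eq_of_degree_eq (Polynomial.degree_eq_degree_of_associated hnum),
    Polynomial.natDegree_eq_of_degree_eq (Polynomial.degree_eq_degree_of_associated hdenom)]

theorem X_pow_add_C_div_X_pow_eq_div (m : ℕ) (a : K) :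
    (X ^ m + C a / X ^ m : RatFunc K) =
      algebraMap K[X] (RatFunc K) (.C a + .X ^ m * .X ^ m) /
        algebraMap K[X] (RatFunc K) (.X ^ m) := by
  have hX : (X : RatFunc K) ^ m ≠ 0 := pow_ne_zero m X_ne_zero
  simp only [map_add, map_mul, map_pow, algebraMap_X, algebraMap_C]
  field_simp
  ring

theorem finrank_adjoin_X_pow_add_C_div_X_pow {m : ℕ} (hm : m ≠ 0) {a : K} (ha : a ≠ 0) :
    Module.finrank K⟮(X ^ m + C a / X ^ m : RatFunc K)⟯ (RatFunc K) = 2 * m := by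
  have hcop : IsCoprime (.C a + .X ^ m * .X ^ m : K[X]) (.X ^ m) :=
    IsCoprime.add_mul_left_left ⟨.C a⁻¹, 0, by simp [← Polynomial.C_mul, ha]⟩ _
  have hdeg : (.C a + .X ^ m * .X ^ m : K[X]).natDegree = 2 * m := by
    rw [← pow_add, ← two_mul]
    compute_degree!
    simp [hm]
  rw [X_pow_add_C_div_X_pow_eq_div, finrank_adjoin_div_of_isCoprime hcop (by simp), hdeg,
    Polynomial.natDegree_X_pow, max_eq_left (by lia)]

theorem X_pow_add_C_div_X_pow_ne_C {m : ℕ} (hm : m ≠ 0) {a : K} (ha : a ≠ 0) :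
    ¬∃ c, (X ^ m + C a / X ^ m : RatFunc K) = C c := by
  intro h
  have hdeg := finrank_adjoin_X_pow_add_C_div_X_pow hm ha
  rw [finrank_eq_max_natDegree, ((eq_C_iff _).mp h).1, ((eq_C_iff _).mp h).2] at hdeg
  lia

section IntermediateField

variable {F : IntermediateField K (RatFunc K)}

theorem ratFunc_algHom_ext {L : Type*} [Semiring L] [Algebra F L] {φ ψ : RatFunc K →ₐ[F] L}
    (h : φ X = ψ X) : φ = ψ := by
  let e := RatFunc.IntermediateField.adjoinXEquiv F
  refine (AlgHom.cancel_right (f := e.toAlgHom) e.surjective).mp <|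
    adjoin_algHom_ext F fun x hx ↦ ?_
  obtain rfl := hx
  exact h

theorem exists_algEquiv_apply_X_eq_of_aeval_minpoly [Algebra.IsAlgebraic F (RatFunc K)]
    {g : RatFunc K} (hg : aeval g (minpoly F (X : RatFunc K)) = 0) :
    ∃ e : RatFunc K ≃ₐ[F] RatFunc K, e X = g := by
  have hX : IsIntegral F (X : RatFunc K) := Algebra.IsIntegral.isIntegral _
  have hgroot : g ∈ (minpoly F (X : RatFunc K)).aroots (RatFunc K) :=
    Polynomial.mem_aroots.mpr ⟨minpoly.ne_zero hX, hg⟩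
  let φ : F⟮(X : RatFunc K)⟯ →ₐ[F] RatFunc K := (algHomAdjoinIntegralEquiv F hX).symm ⟨g, hgroot⟩
  let ψ : RatFunc K →ₐ[F] RatFunc K :=
    φ.comp (RatFunc.IntermediateField.adjoinXEquiv F).symm.toAlgHom
  exact ⟨(Algebra.IsAlgebraic.algEquivEquivAlgHom F _).symm ψ,
    algHomAdjoinIntegralEquiv_symm_apply_gen F hX ⟨g, hgroot⟩⟩

end IntermediateField

theorem exists_algEquiv_adjoin_apply_X_eq {f g : RatFunc K} {p q : K[X]} (hf : ¬∃ c, f = C c)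
    (hfX : f = algebraMap K[X] (RatFunc K) p / algebraMap K[X] (RatFunc K) q)
    (hgq : aeval g q ≠ 0) (hfg : f = aeval g p / aeval g q) :
    ∃ e : RatFunc K ≃ₐ[K⟮f⟯] RatFunc K, e X = g := by
  have := f.isAlgebraic_adjoin_simple_X' hf
  have hq : q ≠ 0 := by rintro rfl; simp at hgq
  have hgp : aeval g p = f * aeval g q := (div_eq_iff hgq).mp hfg.symm
  have hnum : aeval g f.num = f * aeval g f.denom := by
    have hcross := congrArg (aeval g) ((num_mul_eq_mul_denom_iff hq).mpr hfX)
    rw [map_mul, map_mul, hgp, mul_right_comm] at hcross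
    exact mul_right_cancel₀ hgq hcross
  refine exists_algEquiv_apply_X_eq_of_aeval_minpoly ?_
  rw [← minpoly.eq_of_irreducible (f.irreducible_minpolyX hf) f.minpolyX_aeval_X]
  simp [hnum]

theorem exists_algEquiv_adjoin_X_pow_add_C_div_X_pow {m : ℕ} (hm : m ≠ 0) {a : K} (ha : a ≠ 0)
    {g : RatFunc K} (hg : g ≠ 0)
    (hfg : (X ^ m + C a / X ^ m : RatFunc K) = g ^ m + C a / g ^ m) :
    ∃ e : RatFunc K ≃ₐ[K⟮(X ^ m + C a / X ^ m : RatFunc K)⟯] RatFunc K, e X = g := by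
  have hgm : g ^ m ≠ 0 := pow_ne_zero m hg
  refine exists_algEquiv_adjoin_apply_X_eq (X_pow_add_C_div_X_pow_ne_C hm ha)
    (X_pow_add_C_div_X_pow_eq_div m a) (by simpa using hgm) ?_
  rw [hfg]
  simp only [map_add, map_mul, map_pow, Polynomial.aeval_X, Polynomial.aeval_C, algebraMap_eq_C]
  field_simp
  ring

section IntermediateField

variable {F : IntermediateField K (RatFunc K)} {σ τ : RatFunc K ≃ₐ[F] RatFunc K} {a : K}

theorem ratFunc_algEquiv_ext (h : σ X = τ X) : σ = τ :=
  AlgEquiv.coe_toAlgHom_injective (ratFunc_algHom_ext h)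

theorem ratFunc_algEquiv_apply_C (σ : RatFunc K ≃ₐ[F] RatFunc K) (c : K) : σ (C c) = C c :=
  σ.commutes (algebraMap K F c)

theorem pow_apply_X_of_apply_X_eq_C_mul_X (h : σ X = C a * X) (i : ℕ) :
    (σ ^ i) X = C (a ^ i) * X := by
  induction i with
  | zero => simp
  | succ i ih =>
    rw [pow_succ', AlgEquiv.mul_apply, ih, map_mul, ratFunc_algEquiv_apply_C, h, pow_succ, map_mul,
      mul_assoc]

theorem orderOf_eq_of_apply_X_eq_C_mul_X (h : σ X = C a * X) : orderOf σ = orderOf a := by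
  refine orderOf_eq_orderOf_iff.mpr fun i ↦ ⟨fun hi ↦ ?_, fun hi ↦ ?_⟩
  · have hX := pow_apply_X_of_apply_X_eq_C_mul_X h i
    rw [hi, AlgEquiv.one_apply, eq_comm, mul_eq_right₀ X_ne_zero, ← map_one C] at hX
    exact C_injective hX
  · exact ratFunc_algEquiv_ext <| by simp [pow_apply_X_of_apply_X_eq_C_mul_X h, hi]

theorem sq_eq_one_of_apply_X_eq_C_div_X (ha : a ≠ 0) (h : τ X = C a / X) : τ ^ 2 = 1 :=
  ratFunc_algEquiv_ext <| by
    rw [sq, AlgEquiv.mul_apply, h, map_div₀, ratFunc_algEquiv_apply_C, h,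
      div_div_cancel₀ ((map_ne_zero C).mpr ha), AlgEquiv.one_apply]

theorem C_div_X_ne_C_mul_X (ha : a ≠ 0) (b : K) : (C a / X : RatFunc K) ≠ C b * X := by
  intro h
  rw [div_eq_iff X_ne_zero, ← algebraMap_C, ← algebraMap_C, ← algebraMap_X, ← map_mul, ← map_mul,
    (algebraMap_injective K).eq_iff] at h
  exact ha (by simpa using congrArg (Polynomial.coeff · 0) h)

theorem notMem_zpowers_of_apply_X_eq_C_div_X [Finite (RatFunc K ≃ₐ[F] RatFunc K)] {b : K}
    (ha : a ≠ 0) (hσ : σ X = C b * X) (hτ : τ X = C a / X) : τ ∉ Subgroup.zpowers σ := by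
  intro h
  obtain ⟨i, rfl⟩ := mem_powers_iff_mem_zpowers.mpr h
  exact C_div_X_ne_C_mul_X ha (b ^ i) (hτ.symm.trans (pow_apply_X_of_apply_X_eq_C_mul_X hσ i))

theorem isGalois_and_closure_eq_top_and_mulEquiv_dihedralGroup
    [FiniteDimensional F (RatFunc K)] {b : K} (ha : a ≠ 0)
    (hσ : σ X = C b * X) (hτ : τ X = C a / X)
    (hrank : Module.finrank F (RatFunc K) ≤ 2 * orderOf b) :
    IsGalois F (RatFunc K) ∧ Subgroup.closure {σ, τ} = ⊤ ∧
      Nonempty ((RatFunc K ≃ₐ[F] RatFunc K) ≃* DihedralGroup (orderOf b)) := by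
  have hb : b ≠ 0 := by
    rintro rfl
    simp [X_ne_zero] at hσ
  have hστ : (σ * τ) X = C (a / b) / X := by
    rw [AlgEquiv.mul_apply, hτ, map_div₀, ratFunc_algEquiv_apply_C, hσ, map_div₀, div_div]
  have hord : orderOf σ = orderOf b := orderOf_eq_of_apply_X_eq_C_mul_X hσ
  have hσ_pow : σ ^ orderOf b = 1 := hord ▸ pow_orderOf_eq_one σ
  have hτ_sq : τ ^ 2 = 1 := sq_eq_one_of_apply_X_eq_C_div_X ha hτ
  have hστ_sq : (σ * τ) ^ 2 = 1 := sq_eq_one_of_apply_X_eq_C_div_X (div_ne_zero ha hb) hστ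
  have hcard_le : Nat.card (RatFunc K ≃ₐ[F] RatFunc K) ≤ Module.finrank F (RatFunc K) :=
    Nat.card_eq_fintype_card.trans_le AlgEquiv.card_le
  have hbij := dihedralLift_bijective hσ_pow hτ_sq hστ_sq hord
    (notMem_zpowers_of_apply_X_eq_C_div_X ha hσ hτ) (hcard_le.trans hrank)
  let e := MulEquiv.ofBijective _ hbij
  have hcard : Nat.card (RatFunc K ≃ₐ[F] RatFunc K) = 2 * orderOf b := by
    rw [← Nat.card_congr e.toEquiv, DihedralGroup.nat_card]
  refine ⟨IsGalois.of_card_aut_eq_finrank _ _ (hcard_le.antisymm (hcard ▸ hrank)), ?_, ⟨e.symm⟩⟩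
  rw [← range_dihedralLift hσ_pow hτ_sq hστ_sq, MonoidHom.range_eq_top.mpr hbij.surjective]

end IntermediateField

end RatFunc

theorem stmt19_general {k : Type*} [Field k] (m : ℕ) (hm : m ≠ 0) (ζ α : k)
    (hζ : IsPrimitiveRoot ζ m) (hα : α ≠ 0)
    (F : IntermediateField k (RatFunc k))
    (hF : F = IntermediateField.adjoin k
      {(RatFunc.X ^ m + RatFunc.C (α ^ m) / RatFunc.X ^ m : RatFunc k)}) :
    IsGalois F (RatFunc k) ∧ Module.finrank F (RatFunc k) = 2 * m ∧
    ∃ σ τ : RatFunc k ≃ₐ[F] RatFunc k,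
      σ RatFunc.X = RatFunc.C ζ * RatFunc.X ∧
      τ RatFunc.X = RatFunc.C α / RatFunc.X ∧
      (⊤ : Subgroup (RatFunc k ≃ₐ[F] RatFunc k)) = Subgroup.closure {σ, τ} ∧
      Nonempty ((RatFunc k ≃ₐ[F] RatFunc k) ≃* DihedralGroup m) := by
  subst hF
  have hCζ0 : (C ζ : RatFunc k) ≠ 0 := (map_ne_zero C).mpr (hζ.ne_zero hm)
  have hCα0 : (C α : RatFunc k) ≠ 0 := (map_ne_zero C).mpr hα
  have hαm : α ^ m ≠ 0 := pow_ne_zero m hα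
  have hrank := finrank_adjoin_X_pow_add_C_div_X_pow hm hαm
  have := Module.finite_of_finrank_pos (hrank.trans_gt (by lia))
  obtain ⟨σ, hσ⟩ := exists_algEquiv_adjoin_X_pow_add_C_div_X_pow hm hαm (g := C ζ * X)
    (mul_ne_zero hCζ0 X_ne_zero) (by rw [mul_pow, ← map_pow, hζ.pow_eq_one, map_one, one_mul])
  obtain ⟨τ, hτ⟩ := exists_algEquiv_adjoin_X_pow_add_C_div_X_pow hm hαm (g := C α / X)
    (div_ne_zero hCα0 X_ne_zero)
    (by rw [div_pow, map_pow, div_div_cancel₀ (pow_ne_zero m hCα0), add_comm])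
  obtain ⟨hgalois, hclosure, hdihedral⟩ :=
    isGalois_and_closure_eq_top_and_mulEquiv_dihedralGroup hα hσ hτ
      (hrank.trans_le (by rw [hζ.eq_orderOf]))
  exact ⟨hgalois, hrank, σ, τ, hσ, hτ, hclosure.symm, hζ.eq_orderOf ▸ hdihedral⟩

theorem stmt19 {k : Type*} [Field k] (m : ℕ) (hm : 3 ≤ m) (ζ α : k)
    (hζ : IsPrimitiveRoot ζ m) (hα : α ≠ 0)
    (hchar2 : ringChar k ≠ 2) (hchar : ¬ ringChar k ∣ 2 * m)
    (F : IntermediateField k (RatFunc k))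
    (hF : F = IntermediateField.adjoin k
      {(RatFunc.X ^ m + RatFunc.C (α ^ m) / RatFunc.X ^ m : RatFunc k)}) :
    IsGalois F (RatFunc k) ∧ Module.finrank F (RatFunc k) = 2 * m ∧
    ∃ σ τ : RatFunc k ≃ₐ[F] RatFunc k,
      σ RatFunc.X = RatFunc.C ζ * RatFunc.X ∧
      τ RatFunc.X = RatFunc.C α / RatFunc.X ∧
      (⊤ : Subgroup (RatFunc k ≃ₐ[F] RatFunc k)) = Subgroup.closure {σ, τ} ∧
      Nonempty ((RatFunc k ≃ₐ[F] RatFunc k) ≃* DihedralGroup m) :=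
  stmt19_general m (by lia) ζ α hζ hα F hF
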